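/- Let W be a finite reflection group with root system Φ, a a generic point, Φ⁺ = {α ∈ Φ : ⟨a,α⟩ > 0}, and Δ a simple system for Φ⁺. Then the permutahedron admits the half-space description: conv{w(a) : w ∈ W} = {x ∈ V : x − a ∈ span_ℝ(Δ) and for all w ∈ W and all α ∈ Δ, c_α(w⁻¹(x) − a) ≤ 0}, where c_α is the α-th coordinate functional with respect to the basis Δ of span_ℝ(Δ). -/

import Mathlib

/-!
For a finite orbit, `x ∈ conv (W a)` if and only if `a - w⁻¹ x` lies in the cone spanned by `Δ`
for every `w ∈ W`; since `Δ` is linearly independent, this is a condition on signs of coordinates.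

The forward implication reduces by convexity to `a - w a ∈ cone Δ`, because the condition is convex
in `x`. Reach `w a` from `a` by simple reflections. A simple reflection permutes the positive roots
other than its own, so whenever `⟪y, γ⟫ < 0` for a point `y` reached in `n` steps and a positive
root `γ`, the point `s_γ y` is reached in fewer than `n` steps. Hence a step `y ↦ s_α y` either
subtracts a nonnegative multiple of `α` or can be replaced by a shorter path.

For the converse, a functional `g` separating `x` from the polytope attains its maximum over the
orbit at some `w a`. Comparing with the neighbours `w (s_α a)` shows that `g ∘ w` is nonnegative on
`Δ`, hence on `a - w⁻¹ x`, so `g x ≤ g (w a)`.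
-/

open scoped RealInnerProductSpace

variable {V : Type*} [NormedAddCommGroup V] [InnerProductSpace ℝ V]

/-- `s` acts as the orthogonal reflection along the nonzero vector `α`:
`s v = v - 2 (⟪v,α⟫/⟪α,α⟫) α`. -/
def IsReflAlong (s : V ≃ₗᵢ[ℝ] V) (α : V) : Prop :=
  α ≠ 0 ∧ ∀ v : V, s v = v - ((2 * ⟪v, α⟫ / ⟪α, α⟫) • α)

/-- `s` is a reflection. -/
def IsReflection (s : V ≃ₗᵢ[ℝ] V) : Prop :=
  ∃ α : V, IsReflAlong s α

/-- A reflection group: a subgroup of the group of linear isometries of `V` generated by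
the reflections it contains. -/
def IsReflectionGroup (W : Subgroup (V ≃ₗᵢ[ℝ] V)) : Prop :=
  W = Subgroup.closure {s | IsReflection s ∧ s ∈ W}

/-- `a` is a generic point for `W`: it is fixed by no reflection belonging to `W`. -/
def IsGeneric (W : Subgroup (V ≃ₗᵢ[ℝ] V)) (a : V) : Prop :=
  ∀ s ∈ W, IsReflection s → s a ≠ a

/-- The `W`-orbit of the point `a`. -/
def orbitSet (W : Subgroup (V ≃ₗᵢ[ℝ] V)) (a : V) : Set V :=
  {x | ∃ w ∈ W, x = w a}

/-- The permutahedron `Perm^a(W)`: the convex hull of the `W`-orbit of `a`. -/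
noncomputable def permutahedron (W : Subgroup (V ≃ₗᵢ[ℝ] V)) (a : V) : Set V :=
  convexHull ℝ (orbitSet W a)

/-- A root system for `W`. -/
structure IsRootSystem (W : Subgroup (V ≃ₗᵢ[ℝ] V)) (Φ : Set V) : Prop where
  finite : Φ.Finite
  nonempty : Φ.Nonempty
  ne_zero : ∀ α ∈ Φ, α ≠ 0
  gen : W = Subgroup.closure {s | ∃ α ∈ Φ, IsReflAlong s α}
  line : ∀ α ∈ Φ, {β ∈ Φ | ∃ t : ℝ, β = t • α} = {α, -α}
  stable : ∀ w ∈ W, (⇑w) '' Φ = Φ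

/-- The positive system determined by the generic point `a`: roots `α` with `⟪a, α⟫ > 0`. -/
def posSystem (a : V) (Φ : Set V) : Set V :=
  {α ∈ Φ | 0 < ⟪a, α⟫}

/-- `Δ` is a simple system for the positive system `Φp`: `Δ ⊆ Φp` is linearly independent and
every element of `Φp` is a linear combination of `Δ` with nonnegative coefficients. -/
def IsSimpleSystem (Φp Δ : Set V) : Prop :=
  Δ ⊆ Φp ∧ LinearIndependent ℝ ((↑) : Δ → V) ∧
    ∀ β ∈ Φp, ∃ c : V →₀ ℝ, (c.support : Set V) ⊆ Δ ∧ (∀ v : V, 0 ≤ c v) ∧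
      β = c.sum fun v r => r • v

/-- The subgroup generated by the reflections along the vectors of `I`. -/
def genSubgroup (I : Set V) : Subgroup (V ≃ₗᵢ[ℝ] V) :=
  Subgroup.closure {s | ∃ β ∈ I, IsReflAlong s β}

theorem finsupp_eq_of_sum_smul_eq {R E : Type*} [Semiring R] [AddCommMonoid E] [Module R E]
    {S : Set E} (hS : LinearIndependent R ((↑) : S → E)) {c d : E →₀ R}
    (hc : (c.support : Set E) ⊆ S) (hd : (d.support : Set E) ⊆ S)
    (h : (c.sum fun v r => r • v) = d.sum fun v r => r • v) : c = d :=
  linearIndepOn_iffₛ.1 (show LinearIndepOn R id S from hS) c hc d hd h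

section Cone

variable {R E : Type*} [Ring R] [PartialOrder R] [IsOrderedRing R] [AddCommGroup E] [Module R E]
  {S : Set E}

theorem apply_nonneg_of_mem_hull {g : E →ₗ[R] R} (hg : ∀ α ∈ S, 0 ≤ g α) {v : E}
    (hv : v ∈ PointedCone.hull R S) : 0 ≤ g v :=
  (Submodule.span_le.2 hg : PointedCone.hull R S ≤ (PointedCone.positive R R).comap g) hv

theorem neg_mem_hull_iff (hS : LinearIndependent R ((↑) : S → E)) {v : E} :
    -v ∈ PointedCone.hull R S ↔ v ∈ Submodule.span R S ∧
      ∀ α ∈ S, ∀ c : E →₀ R, (c.support : Set E) ⊆ S →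
        v = (c.sum fun v r => r • v) → c α ≤ 0 := by
  have sum_neg (c : E →₀ R) : ((-c).sum fun v r => r • v) = -c.sum fun v r => r • v := by
    rw [Finsupp.sum_neg_index fun v => zero_smul R v]
    simp only [neg_smul, Finsupp.sum_neg]
  constructor
  · intro hv
    refine ⟨neg_mem_iff.1 (PointedCone.hull_le_span R S hv), fun α _ c hc hvc => ?_⟩
    obtain ⟨d, hd, hd_nonneg, hdv⟩ := PointedCone.mem_hull_set.1 hv
    obtain rfl : d = -c := finsupp_eq_of_sum_smul_eq hS hd (by rwa [Finsupp.support_neg])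
      (by rw [hdv, sum_neg, hvc])
    exact neg_nonneg.1 (hd_nonneg α)
  · rintro ⟨hv, hcoord⟩
    obtain ⟨c, hc, rfl⟩ := Submodule.mem_span_set.1 hv
    refine PointedCone.mem_hull_set.2 ⟨-c, by rwa [Finsupp.support_neg], fun α => ?_, sum_neg c⟩
    by_cases hα : α ∈ c.support
    · exact neg_nonneg.2 (hcoord α (hc hα) c hc rfl)
    · simp [Finsupp.notMem_support_iff.1 hα]

theorem exists_eq_smul_of_add_eq_smul (hS : LinearIndependent R ((↑) : S → E)) {α u v : E} {t : R}
    (hα : α ∈ S) (hu : u ∈ PointedCone.hull R S) (hv : v ∈ PointedCone.hull R S)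
    (huv : u + v = t • α) : ∃ r : R, u = r • α := by
  classical
  obtain ⟨c, hc, hc_nonneg, rfl⟩ := PointedCone.mem_hull_set.1 hu
  obtain ⟨d, hd, hd_nonneg, rfl⟩ := PointedCone.mem_hull_set.1 hv
  have hcd : c + d = Finsupp.single α t := by
    refine finsupp_eq_of_sum_smul_eq hS ?_ ?_ ?_
    · exact (Finset.coe_subset.2 Finsupp.support_add).trans (by simp [hc, hd])
    · exact (Finset.coe_subset.2 Finsupp.support_single_subset).trans (by simpa using hα)
    · rw [Finsupp.sum_add_index' (by simp) (by simp [add_smul]), huv,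
        Finsupp.sum_single_index (zero_smul R α)]
  have hc_off : ∀ β ≠ α, c β = 0 := by
    intro β hβ
    have hβ_sum : c β + d β = 0 := by simpa [hβ] using DFunLike.congr_fun hcd β
    exact ((add_eq_zero_iff_of_nonneg (hc_nonneg β) (hd_nonneg β)).1 hβ_sum).1
  have hc_single : c = Finsupp.single α (c α) := by
    ext β
    rcases eq_or_ne β α with rfl | hβ
    · simp
    · simp [hβ, hc_off β hβ]
  exact ⟨c α, by rw [hc_single, Finsupp.sum_single_index (zero_smul R α), Finsupp.single_eq_same]⟩

end Cone

theorem exists_inner_pos_of_mem_hull {S : Set V} {v : V} (hv : v ∈ PointedCone.hull ℝ S)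
    (hv0 : v ≠ 0) : ∃ α ∈ S, 0 < ⟪v, α⟫ := by
  by_contra! hle
  have hneg : 0 ≤ innerₗ V (-v) v :=
    apply_nonneg_of_mem_hull (fun α hα => by simpa using hle α hα) hv
  have hpos := real_inner_self_pos.2 hv0
  simp only [innerₗ_apply_apply, inner_neg_left] at hneg
  linarith

/-- The orthogonal reflection in the hyperplane `α^⊥`, as a total function of `α`; it is the
identity for `α = 0`. -/
noncomputable def rootRefl (α : V) : V ≃ₗᵢ[ℝ] V := (ℝ ∙ α)ᗮ.reflection

theorem rootRefl_apply (α v : V) : rootRefl α v = v - (2 * ⟪v, α⟫ / ⟪α, α⟫) • α := by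
  rw [rootRefl, Submodule.reflection_orthogonal_apply, Submodule.reflection_singleton_apply,
    real_inner_comm, real_inner_self_eq_norm_sq, RCLike.ofReal_real_eq_id, id, neg_sub,
    mul_div_assoc, mul_smul, two_smul, two_smul]

theorem isReflAlong_iff {s : V ≃ₗᵢ[ℝ] V} {α : V} : IsReflAlong s α ↔ α ≠ 0 ∧ s = rootRefl α := by
  simp only [IsReflAlong, LinearIsometryEquiv.ext_iff, rootRefl_apply]

@[simp]
theorem rootRefl_rootRefl (α v : V) : rootRefl α (rootRefl α v) = v :=
  Submodule.reflection_reflection _ v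

theorem rootRefl_inv (α : V) : (rootRefl α)⁻¹ = rootRefl α :=
  Submodule.reflection_inv

theorem rootRefl_neg (α : V) : rootRefl (-α) = rootRefl α := by
  ext v
  simp [rootRefl_apply, neg_div]

theorem map_rootRefl (w : V ≃ₗᵢ[ℝ] V) (γ v : V) : w (rootRefl γ v) = rootRefl (w γ) (w v) := by
  simp [rootRefl_apply]

theorem inner_rootRefl_left (α u v : V) : ⟪rootRefl α u, v⟫ = ⟪u, rootRefl α v⟫ := by
  rw [← (rootRefl α).inner_map_map, rootRefl_rootRefl]

theorem rootRefl_mem_genSubgroup {I : Set V} {α : V} (hα : α ∈ I) (hα0 : α ≠ 0) :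
    rootRefl α ∈ genSubgroup I :=
  Subgroup.subset_closure ⟨α, hα, isReflAlong_iff.2 ⟨hα0, rfl⟩⟩

theorem genSubgroup_induction {I : Set V} {p : (V ≃ₗᵢ[ℝ] V) → Prop} (one : p 1)
    (rootRefl_mul : ∀ β ∈ I, ∀ w, p w → p (rootRefl β * w)) {w : V ≃ₗᵢ[ℝ] V}
    (hw : w ∈ genSubgroup I) : p w := by
  induction hw using Subgroup.closure_induction_left with
  | one => exact one
  | mul_left s hs w _ ih =>
    obtain ⟨β, hβ, hs⟩ := hs
    rw [(isReflAlong_iff.1 hs).2]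
    exact rootRefl_mul β hβ w ih
  | inv_mul_cancel s hs w _ ih =>
    obtain ⟨β, hβ, hs⟩ := hs
    rw [(isReflAlong_iff.1 hs).2, rootRefl_inv]
    exact rootRefl_mul β hβ w ih

theorem map_sub_self_mem_span {I : Set V} {w : V ≃ₗᵢ[ℝ] V} (hw : w ∈ genSubgroup I) (v : V) :
    w v - v ∈ Submodule.span ℝ I := by
  refine genSubgroup_induction (p := fun w => w v - v ∈ Submodule.span ℝ I) (by simp) ?_ hw
  intro β hβ w ih
  rw [LinearIsometryEquiv.coe_mul, Function.comp_apply, rootRefl_apply, sub_right_comm]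
  exact sub_mem ih (Submodule.smul_mem _ _ (Submodule.subset_span hβ))

section Roots

variable {W : Subgroup (V ≃ₗᵢ[ℝ] V)} {Φ Δ : Set V} {a : V}

namespace IsRootSystem

theorem rootRefl_mem (hΦ : IsRootSystem W Φ) {α : V} (hα : α ∈ Φ) : rootRefl α ∈ W :=
  hΦ.gen ▸ rootRefl_mem_genSubgroup hα (hΦ.ne_zero α hα)

theorem map_mem (hΦ : IsRootSystem W Φ) {w : V ≃ₗᵢ[ℝ] V} (hw : w ∈ W) {α : V} (hα : α ∈ Φ) :
    w α ∈ Φ :=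
  hΦ.stable w hw ▸ Set.mem_image_of_mem w hα

theorem eq_or_eq_neg_of_eq_smul (hΦ : IsRootSystem W Φ) {α β : V} (hα : α ∈ Φ) (hβ : β ∈ Φ) {t : ℝ}
    (h : β = t • α) : β = α ∨ β = -α :=
  (hΦ.line α hα).subset ⟨hβ, t, h⟩

theorem neg_mem (hΦ : IsRootSystem W Φ) {α : V} (hα : α ∈ Φ) : -α ∈ Φ :=
  ((hΦ.line α hα).superset (Or.inr rfl)).1

theorem mem_posSystem_or_neg_mem (hΦ : IsRootSystem W Φ) (ha : IsGeneric W a) {α : V}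
    (hα : α ∈ Φ) : α ∈ posSystem a Φ ∨ -α ∈ posSystem a Φ := by
  have hne : ⟪a, α⟫ ≠ 0 := fun h0 =>
    ha _ (hΦ.rootRefl_mem hα) ⟨α, isReflAlong_iff.2 ⟨hΦ.ne_zero α hα, rfl⟩⟩
      (by simp [rootRefl_apply, h0])
  rcases hne.lt_or_gt with h | h
  · exact Or.inr ⟨hΦ.neg_mem hα, by rwa [inner_neg_right, neg_pos]⟩
  · exact Or.inl ⟨hα, h⟩

end IsRootSystem

theorem IsSimpleSystem.subset_hull {Φp : Set V} (hΔ : IsSimpleSystem Φp Δ) :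
    Φp ⊆ PointedCone.hull ℝ Δ := by
  intro β hβ
  obtain ⟨c, hc, hc_nonneg, rfl⟩ := hΔ.2.2 β hβ
  exact PointedCone.mem_hull_set.2 ⟨c, hc, hc_nonneg, rfl⟩

theorem rootRefl_mem_posSystem (hΦ : IsRootSystem W Φ) (ha : IsGeneric W a)
    (hΔ : IsSimpleSystem (posSystem a Φ) Δ) {α β : V} (hα : α ∈ Δ) (hβ : β ∈ posSystem a Φ)
    (hne : β ≠ α) : rootRefl α β ∈ posSystem a Φ := by
  have hαΦ := hΔ.1 hα
  refine (hΦ.mem_posSystem_or_neg_mem ha (hΦ.map_mem (hΦ.rootRefl_mem hαΦ.1) hβ.1)).resolve_right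
    fun hneg => ?_
  -- Otherwise `β` and `-s_α β` are positive with sum on the extremal ray of `α`.
  obtain ⟨t, ht⟩ := exists_eq_smul_of_add_eq_smul hΔ.2.1 hα (hΔ.subset_hull hβ)
    (hΔ.subset_hull hneg) (by rw [rootRefl_apply, neg_sub, add_sub_cancel])
  rcases hΦ.eq_or_eq_neg_of_eq_smul hαΦ.1 hβ.1 ht with rfl | rfl
  · exact hne rfl
  · have h := hβ.2
    rw [inner_neg_right] at h
    linarith [hαΦ.2]

/-- Descent on `⟪a, β⟫`: a simple root `α` with `⟪β, α⟫ > 0` conjugates `s_β` to `s_γ` for the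
positive root `γ = s_α β`, and `⟪a, γ⟫ < ⟪a, β⟫`. -/
theorem rootRefl_mem_genSubgroup_simple (hΦ : IsRootSystem W Φ) (ha : IsGeneric W a)
    (hΔ : IsSimpleSystem (posSystem a Φ) Δ) {β : V} (hβ : β ∈ posSystem a Φ) :
    rootRefl β ∈ genSubgroup Δ := by
  by_contra hβ_not_mem
  obtain ⟨γ, ⟨hγ, hγ_not_mem⟩, hγ_min⟩ := Set.exists_min_image
    {γ ∈ posSystem a Φ | rootRefl γ ∉ genSubgroup Δ} (fun γ => ⟪a, γ⟫)
    (hΦ.finite.subset fun γ hγ => hγ.1.1) ⟨β, hβ, hβ_not_mem⟩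
  obtain ⟨α, hα, hγα⟩ := exists_inner_pos_of_mem_hull (hΔ.subset_hull hγ) (hΦ.ne_zero γ hγ.1)
  have hα0 : α ≠ 0 := hΦ.ne_zero α (hΔ.1 hα).1
  have hα_mem : rootRefl α ∈ genSubgroup Δ := rootRefl_mem_genSubgroup hα hα0
  have hne : γ ≠ α := fun h => hγ_not_mem (h ▸ hα_mem)
  have hconj : rootRefl γ = rootRefl α * rootRefl (rootRefl α γ) * rootRefl α := by
    ext v
    simp only [LinearIsometryEquiv.coe_mul, Function.comp_apply]
    rw [← map_rootRefl, rootRefl_rootRefl]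
  have hnot_mem : rootRefl (rootRefl α γ) ∉ genSubgroup Δ := fun h =>
    hγ_not_mem (hconj ▸ mul_mem (mul_mem hα_mem h) hα_mem)
  have hle := hγ_min _ ⟨rootRefl_mem_posSystem hΦ ha hΔ hα hγ hne, hnot_mem⟩
  have hdrop : 0 < 2 * ⟪γ, α⟫ / ⟪α, α⟫ * ⟪a, α⟫ :=
    mul_pos (div_pos (by linarith) (real_inner_self_pos.2 hα0)) (hΔ.1 hα).2
  simp only [rootRefl_apply, inner_sub_right, real_inner_smul_right] at hle
  linarith

theorem le_genSubgroup_simple (hΦ : IsRootSystem W Φ) (ha : IsGeneric W a)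
    (hΔ : IsSimpleSystem (posSystem a Φ) Δ) : W ≤ genSubgroup Δ := by
  rw [hΦ.gen, Subgroup.closure_le]
  rintro s ⟨α, hα, hs⟩
  rw [(isReflAlong_iff.1 hs).2]
  rcases hΦ.mem_posSystem_or_neg_mem ha hα with h | h
  · exact rootRefl_mem_genSubgroup_simple hΦ ha hΔ h
  · exact rootRefl_neg α ▸ rootRefl_mem_genSubgroup_simple hΦ ha hΔ h

/-- `ReachableIn Δ a n y` says that `y` is the end of a gallery of length `n` starting at `a`: it is
obtained from `a` by applying `n` reflections along vectors of `Δ` one after the other. -/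
inductive ReachableIn (Δ : Set V) (a : V) : ℕ → V → Prop
  | refl : ReachableIn Δ a 0 a
  | step {n : ℕ} {y α : V} (hy : ReachableIn Δ a n y) (hα : α ∈ Δ) :
      ReachableIn Δ a (n + 1) (rootRefl α y)

namespace ReachableIn

theorem exchange (hΦ : IsRootSystem W Φ) (ha : IsGeneric W a)
    (hΔ : IsSimpleSystem (posSystem a Φ) Δ) {n : ℕ} {y γ : V} (hy : ReachableIn Δ a n y)
    (hγ : γ ∈ posSystem a Φ) (hneg : ⟪y, γ⟫ < 0) :
    ∃ m < n, ReachableIn Δ a m (rootRefl γ y) := by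
  induction hy generalizing γ with
  | refl => exact absurd hneg hγ.2.not_gt
  | @step n y α hy hα ih =>
    rcases eq_or_ne γ α with rfl | hne
    · exact ⟨n, n.lt_succ_self, by rwa [rootRefl_rootRefl]⟩
    · rw [inner_rootRefl_left] at hneg
      obtain ⟨m, hm, hreach⟩ := ih (rootRefl_mem_posSystem hΦ ha hΔ hα hγ hne) hneg
      have hcomm : rootRefl α (rootRefl (rootRefl α γ) y) = rootRefl γ (rootRefl α y) := by
        rw [map_rootRefl, rootRefl_rootRefl]
      exact ⟨m + 1, Nat.succ_lt_succ hm, hcomm ▸ hreach.step hα⟩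

theorem sub_mem_hull (hΦ : IsRootSystem W Φ) (ha : IsGeneric W a)
    (hΔ : IsSimpleSystem (posSystem a Φ) Δ) {n : ℕ} {y : V} (hy : ReachableIn Δ a n y) :
    a - y ∈ PointedCone.hull ℝ Δ := by
  induction n using Nat.strong_induction_on generalizing y with
  | _ n ih =>
    cases hy with
    | refl => simp
    | @step n y α hy hα =>
      rcases le_or_gt 0 ⟪y, α⟫ with hnonneg | hneg
      · have hcoef : 0 ≤ 2 * ⟪y, α⟫ / ⟪α, α⟫ :=
          div_nonneg (mul_nonneg zero_le_two hnonneg) real_inner_self_nonneg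
        rw [rootRefl_apply, ← sub_add]
        exact add_mem (ih n n.lt_succ_self hy)
          (PointedCone.smul_mem _ hcoef (PointedCone.subset_hull hα))
      · obtain ⟨m, hm, hreach⟩ := hy.exchange hΦ ha hΔ (hΔ.1 hα) hneg
        exact ih m (hm.trans n.lt_succ_self) hreach

end ReachableIn

theorem exists_reachableIn {w : V ≃ₗᵢ[ℝ] V} (hw : w ∈ genSubgroup Δ) (a : V) :
    ∃ n, ReachableIn Δ a n (w a) := by
  refine genSubgroup_induction (p := fun w => ∃ n, ReachableIn Δ a n (w a)) ⟨0, .refl⟩ ?_ hw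
  rintro α hα w ⟨n, hn⟩
  exact ⟨n + 1, hn.step hα⟩

theorem sub_map_mem_hull (hΦ : IsRootSystem W Φ) (ha : IsGeneric W a)
    (hΔ : IsSimpleSystem (posSystem a Φ) Δ) {w : V ≃ₗᵢ[ℝ] V} (hw : w ∈ W) :
    a - w a ∈ PointedCone.hull ℝ Δ := by
  obtain ⟨n, hn⟩ := exists_reachableIn (le_genSubgroup_simple hΦ ha hΔ hw) a
  exact hn.sub_mem_hull hΦ ha hΔ

theorem sub_map_mem_of_mem_permutahedron {C : PointedCone ℝ V} (hC : ∀ w ∈ W, a - w a ∈ C) {x : V}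
    (hx : x ∈ permutahedron W a) {w : V ≃ₗᵢ[ℝ] V} (hw : w ∈ W) : a - w x ∈ C := by
  have hconvex : Convex ℝ {y | a - w y ∈ C} :=
    C.convex.affine_preimage (AffineMap.const ℝ V a - w.toLinearMap.toAffineMap)
  refine convexHull_min ?_ hconvex hx
  rintro _ ⟨u, hu, rfl⟩
  exact hC (w * u) (mul_mem hw hu)

theorem mem_permutahedron_of_sub_map_mem_hull (hWfin : (W : Set (V ≃ₗᵢ[ℝ] V)).Finite)
    (hΔW : ∀ α ∈ Δ, rootRefl α ∈ W) (hΔa : ∀ α ∈ Δ, 0 < ⟪a, α⟫) {x : V}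
    (hx : ∀ w ∈ W, a - w x ∈ PointedCone.hull ℝ Δ) : x ∈ permutahedron W a := by
  by_contra hx_not_mem
  have horbit : (orbitSet W a).Finite :=
    (hWfin.image fun w => w a).subset fun y ⟨w, hw, hy⟩ => ⟨w, hw, hy.symm⟩
  obtain ⟨g, r, hg_lt, hg_gt⟩ := geometric_hahn_banach_closed_point (convex_convexHull ℝ _)
    (Set.Finite.isClosed_convexHull ℝ horbit) hx_not_mem
  obtain ⟨w, hw, hw_max⟩ := Set.exists_max_image _ (fun w : V ≃ₗᵢ[ℝ] V => g (w a)) hWfin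
    ⟨1, W.one_mem⟩
  have hg_nonneg : ∀ α ∈ Δ, 0 ≤ g (w α) := by
    intro α hα
    have hα0 : α ≠ 0 := by
      rintro rfl
      simpa using hΔa 0 hα
    have hcoef : 0 < 2 * ⟪a, α⟫ / ⟪α, α⟫ :=
      div_pos (mul_pos two_pos (hΔa α hα)) (real_inner_self_pos.2 hα0)
    have hle := hw_max (w * rootRefl α) (mul_mem hw (hΔW α hα))
    simp only [LinearIsometryEquiv.coe_mul, Function.comp_apply, rootRefl_apply, map_sub, map_smul,
      smul_eq_mul, sub_le_self_iff] at hle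
    exact nonneg_of_mul_nonneg_right hle hcoef
  have hle : 0 ≤ g (w (a - w⁻¹ x)) :=
    apply_nonneg_of_mem_hull (g := g.toLinearMap ∘ₗ w.toLinearMap) hg_nonneg
      (hx w⁻¹ (inv_mem hw))
  have hlt := hg_lt (w a) (subset_convexHull ℝ _ ⟨w, hw, rfl⟩)
  have hwx : w (w⁻¹ x) = x := w.apply_symm_apply x
  rw [map_sub, hwx, map_sub] at hle
  linarith

theorem mem_permutahedron_iff (hWfin : (W : Set (V ≃ₗᵢ[ℝ] V)).Finite) (hΦ : IsRootSystem W Φ)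
    (ha : IsGeneric W a) (hΔ : IsSimpleSystem (posSystem a Φ) Δ) {x : V} :
    x ∈ permutahedron W a ↔ ∀ w ∈ W, a - w x ∈ PointedCone.hull ℝ Δ :=
  ⟨fun hx _ => sub_map_mem_of_mem_permutahedron (fun _ => sub_map_mem_hull hΦ ha hΔ) hx,
    mem_permutahedron_of_sub_map_mem_hull hWfin (fun _ hα => hΦ.rootRefl_mem (hΔ.1 hα).1)
      fun _ hα => (hΔ.1 hα).2⟩

end Roots

theorem permutahedron_halfspace_description_general
    (W : Subgroup (V ≃ₗᵢ[ℝ] V)) (hWfin : (W : Set (V ≃ₗᵢ[ℝ] V)).Finite)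
    (Φ : Set V) (hΦ : IsRootSystem W Φ) (a : V) (ha : IsGeneric W a)
    (Δ : Set V) (hΔ : IsSimpleSystem (posSystem a Φ) Δ) :
    permutahedron W a =
      {x : V | x - a ∈ Submodule.span ℝ Δ ∧
        ∀ w ∈ W, ∀ α ∈ Δ, ∀ c : V →₀ ℝ, (c.support : Set V) ⊆ Δ →
          w⁻¹ x - a = (c.sum fun v r => r • v) → c α ≤ 0} := by
  ext x
  simp only [mem_permutahedron_iff hWfin hΦ ha hΔ, Set.mem_ofPred_eq]
  constructor
  · intro hx
    have hcoord (w) (hw : w ∈ W) := (neg_mem_hull_iff hΔ.2.1 (v := w⁻¹ x - a)).1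
      ((neg_sub _ a).symm ▸ hx w⁻¹ (inv_mem hw))
    exact ⟨by simpa using (hcoord 1 W.one_mem).1, fun w hw => (hcoord w hw).2⟩
  · rintro ⟨hx_span, hx_coord⟩ w hw
    have hspan : w x - a ∈ Submodule.span ℝ Δ := by
      simpa using add_mem (map_sub_self_mem_span (le_genSubgroup_simple hΦ ha hΔ hw) x) hx_span
    rw [← neg_sub]
    refine (neg_mem_hull_iff hΔ.2.1).2 ⟨hspan, ?_⟩
    simpa using hx_coord w⁻¹ (inv_mem hw)

/-- the half-space (`ℋ`-) description of the permutahedron: `x` lies in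
`conv(W·a)` iff `x - a ∈ span ℝ Δ` and for all `w ∈ W` and `α ∈ Δ` the `α`-coordinate
(w.r.t. the basis `Δ`) of `w⁻¹(x) - a` is nonpositive. -/
theorem permutahedron_halfspace_description [FiniteDimensional ℝ V]
    (W : Subgroup (V ≃ₗᵢ[ℝ] V)) (hWfin : (W : Set (V ≃ₗᵢ[ℝ] V)).Finite)
    (Φ : Set V) (hΦ : IsRootSystem W Φ) (a : V) (ha : IsGeneric W a)
    (Δ : Set V) (hΔ : IsSimpleSystem (posSystem a Φ) Δ) :
    permutahedron W a =
      {x : V | x - a ∈ Submodule.span ℝ Δ ∧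
        ∀ w ∈ W, ∀ α ∈ Δ, ∀ c : V →₀ ℝ, (c.support : Set V) ⊆ Δ →
          w⁻¹ x - a = (c.sum fun v r => r • v) → c α ≤ 0} :=
  permutahedron_halfspace_description_general W hWfin Φ hΦ a ha Δ hΔ
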